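/- Let G = ℚ_2^× be the multiplicative group of the field of 2-adic numbers, and let N be the set of open finite-index subgroups of G. Then C(G) ∖ N is homeomorphic to the space obtained by glueing [2] × ℕ̄ onto the Cantor space C: that is, there exist 2 distinct points c_1, c_2 of C such that C(G) ∖ N is homeomorphic to the quotient of the disjoint union C ⊔ ([2] × ℕ̄) obtained by identifying, for each i ∈ {1,2}, the accumulation point (i, ∞) with c_i. -/

import Mathlib

open OnePoint

/-- The Chabauty space of a topological group `G`: the set of closed subgroups of `G`. -/
def ChabautySpace (G : Type*) [Group G] [TopologicalSpace G] : Type _ :=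
  {H : Subgroup G // IsClosed (H : Set G)}

/-- The Chabauty topology on the space of closed subgroups, generated by the sets
`O_K = {H | H ∩ K = ∅}` for `K` compact and `O'_U = {H | H ∩ U ≠ ∅}` for `U` open. -/
instance ChabautySpace.instTopologicalSpace (G : Type*) [Group G] [TopologicalSpace G] :
    TopologicalSpace (ChabautySpace G) :=
  TopologicalSpace.generateFrom
    ({S | ∃ K : Set G, IsCompact K ∧ S = {H : ChabautySpace G | (H.1 : Set G) ∩ K = ∅}} ∪
     {S | ∃ U : Set G, IsOpen U ∧ S = {H : ChabautySpace G | ((H.1 : Set G) ∩ U).Nonempty}})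

/-!
An open subgroup of `ℚ₂ˣ` has finite index unless it consists of units of norm one, so `C(G) ∖ N`
is made of the non-open closed subgroups and the open groups of units of norm one.

A closed subgroup `H` meets the torsion-free group `1 + 4ℤ₂ ≅ ℤ₂` in `{1}` or in an open subgroup.
Hence the non-open ones are the groups `S ⊔ ⟨g⟩` with `S ≤ {±1}` and `‖g‖ < 1`, where `g = 0` stands
for the trivial group. These depend continuously on `g` in the compact open unit ball, and `g` can
be moved, so they form a compact perfect set. As `C(G)` embeds in `{0, 1}^ℕ` (record which members
of a countable basis of compact open sets are met), this set is a Cantor space. The open groups of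
units of norm one form two sequences of isolated points, one converging to `{1}` and the other to
`{±1}`.
-/

open Filter Set Topology TopologicalSpace
open scoped NNReal Pointwise

namespace CantorSpace

variable {C : Set (ℕ → Bool)} {x y : ℕ → Bool}

/-- The branching levels of `x` in the tree of initial segments of elements of `C`: both one-bit
extensions of the first `n` bits of `x` are realised in `C`. -/
def IsBranchLevel (C : Set (ℕ → Bool)) (x : ℕ → Bool) (n : ℕ) : Prop :=
  ∀ b, ∃ y ∈ C, y ∈ PiNat.cylinder x n ∧ y n = b

theorem isBranchLevel_congr {n : ℕ} (h : y ∈ PiNat.cylinder x n) :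
    IsBranchLevel C y n ↔ IsBranchLevel C x n := by
  simp only [IsBranchLevel, PiNat.mem_cylinder_iff_eq.1 h]

theorem isBranchLevel_firstDiff (hx : x ∈ C) (hy : y ∈ C) (hxy : x ≠ y) :
    IsBranchLevel C x (PiNat.firstDiff x y) := by
  intro b
  have hne := PiNat.apply_firstDiff_ne hxy
  by_cases hb : x (PiNat.firstDiff x y) = b
  · exact ⟨x, hx, PiNat.self_mem_cylinder _ _, hb⟩
  · refine ⟨y, hy, (PiNat.mem_cylinder_comm _ _ _).1 (PiNat.mem_cylinder_firstDiff x y), ?_⟩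
    exact (Bool.eq_not.2 hne.symm).trans (Bool.eq_not.2 (Ne.symm hb)).symm

theorem infinite_setOf_isBranchLevel (hC : Preperfect C) (hx : x ∈ C) :
    {n | IsBranchLevel C x n}.Infinite := by
  refine Nat.frequently_atTop_iff_infinite.1 (frequently_atTop.2 fun N => ?_)
  have hN : PiNat.cylinder x N ∈ 𝓝 x :=
    (PiNat.isOpen_cylinder _ x N).mem_nhds (PiNat.self_mem_cylinder x N)
  obtain ⟨y, ⟨hyN, hyC⟩, hyx⟩ := accPt_iff_nhds.1 (hC x hx) _ hN
  exact ⟨_, (PiNat.mem_cylinder_iff_le_firstDiff hyx.symm N).1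
    ((PiNat.mem_cylinder_comm _ _ _).1 hyN), isBranchLevel_firstDiff hx hyC hyx.symm⟩

theorem count_isBranchLevel_congr [DecidablePred (IsBranchLevel C x)]
    [DecidablePred (IsBranchLevel C y)] {n : ℕ} (h : y ∈ PiNat.cylinder x n) :
    Nat.count (IsBranchLevel C y) n = Nat.count (IsBranchLevel C x) n := by
  rw [Nat.count_eq_card_filter_range, Nat.count_eq_card_filter_range]
  congr 1
  refine Finset.filter_congr fun k hk => isBranchLevel_congr ?_
  exact PiNat.cylinder_anti x (Finset.mem_range.1 hk).le h

/-- The bits of `x` at its branching levels, which are the free choices made along the path `x`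
of the tree of `C`. -/
noncomputable def branchBits (C : Set (ℕ → Bool)) (x : ℕ → Bool) (j : ℕ) : Bool :=
  x (Nat.nth (IsBranchLevel C x) j)

theorem nth_isBranchLevel_congr (hC : Preperfect C) (hx : x ∈ C) {j : ℕ}
    (h : y ∈ PiNat.cylinder x (Nat.nth (IsBranchLevel C x) j)) :
    Nat.nth (IsBranchLevel C y) j = Nat.nth (IsBranchLevel C x) j := by
  classical
  have hinf := infinite_setOf_isBranchLevel hC hx
  have hbranch := (isBranchLevel_congr h).2 (Nat.nth_mem_of_infinite hinf j)
  have hcount := (count_isBranchLevel_congr h).trans (Nat.count_nth_of_infinite hinf j)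
  simpa only [hcount] using Nat.nth_count hbranch

theorem branchBits_apply_of_mem_cylinder (hC : Preperfect C) (hx : x ∈ C) {j : ℕ}
    (h : y ∈ PiNat.cylinder x (Nat.nth (IsBranchLevel C x) j)) :
    branchBits C y j = y (Nat.nth (IsBranchLevel C x) j) :=
  congrArg y (nth_isBranchLevel_congr hC hx h)

theorem continuousOn_branchBits (hC : Preperfect C) : ContinuousOn (branchBits C) C := by
  refine fun x hx => ContinuousAt.continuousWithinAt (continuousAt_pi.2 fun j => ?_)
  refine (continuous_apply (Nat.nth (IsBranchLevel C x) j)).continuousAt.congr ?_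
  filter_upwards [(PiNat.isOpen_cylinder _ x _).mem_nhds (PiNat.self_mem_cylinder x _)] with y hy
  exact (branchBits_apply_of_mem_cylinder hC hx hy).symm

theorem injOn_branchBits (hC : Preperfect C) : InjOn (branchBits C) C := by
  classical
  intro x hx y hy heq
  by_contra hxy
  have hnth := Nat.nth_count (isBranchLevel_firstDiff hx hy hxy)
  have hcyl := (PiNat.mem_cylinder_comm _ _ _).1 (PiNat.mem_cylinder_firstDiff x y)
  rw [← hnth] at hcyl
  have hbit := congrFun heq _ |>.trans (branchBits_apply_of_mem_cylinder hC hx hcyl)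
  rw [branchBits, hnth] at hbit
  exact PiNat.apply_firstDiff_ne hxy hbit

theorem exists_branchBits_mem_cylinder (hC : Preperfect C) (hne : C.Nonempty) (c : ℕ → Bool)
    (j : ℕ) : ∃ x ∈ C, branchBits C x ∈ PiNat.cylinder c j := by
  induction j with
  | zero => exact hne.imp fun x hx => ⟨hx, by simp [PiNat.cylinder_zero]⟩
  | succ j ih =>
    obtain ⟨x, hx, hxc⟩ := ih
    have hinf := infinite_setOf_isBranchLevel hC hx
    obtain ⟨y, hy, hyx, hyc⟩ := Nat.nth_mem_of_infinite hinf j (c j)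
    refine ⟨y, hy, fun i hi => ?_⟩
    obtain hi | rfl := Nat.lt_succ_iff_lt_or_eq.1 hi
    · have hlt := Nat.nth_strictMono hinf hi
      rw [branchBits_apply_of_mem_cylinder hC hx (PiNat.cylinder_anti x hlt.le hyx), hyx _ hlt]
      exact hxc i hi
    · rw [branchBits_apply_of_mem_cylinder hC hx hyx, hyc]

theorem surjOn_branchBits (hC : Perfect C) (hne : C.Nonempty) :
    SurjOn (branchBits C) C univ := by
  have hclosed : IsClosed (branchBits C '' C) :=
    (hC.closed.isCompact.image_of_continuousOn (continuousOn_branchBits hC.acc)).isClosed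
  intro c _
  rw [← hclosed.closure_eq, (PiNat.isTopologicalBasis_cylinders _).mem_closure_iff]
  rintro _ ⟨d, n, rfl⟩ hc
  obtain ⟨x, hx, hxc⟩ := exists_branchBits_mem_cylinder hC.acc hne c n
  exact ⟨_, PiNat.mem_cylinder_iff_eq.1 hc ▸ hxc, mem_image_of_mem _ hx⟩

theorem nonempty_homeomorph_of_perfect (hC : Perfect C) (hne : C.Nonempty) :
    Nonempty (C ≃ₜ (ℕ → Bool)) := by
  have : CompactSpace C := isCompact_iff_compactSpace.1 hC.closed.isCompact
  have hbij : Function.Bijective (C.domRestrict (branchBits C)) :=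
    ⟨(injOn_branchBits hC.acc).injective, surjOn_iff_surjective.1 (surjOn_branchBits hC hne)⟩
  exact ⟨Continuous.homeoOfEquivCompactToT2 (f := .ofBijective _ hbij)
    (continuousOn_branchBits hC.acc).domRestrict⟩

theorem nonempty_homeomorph_of_preperfect {X : Type*} [TopologicalSpace X] {T : Set X}
    {f : X → ℕ → Bool} (hf : Continuous f) (hinj : Function.Injective f) (hT : IsCompact T)
    (hacc : Preperfect T) (hne : T.Nonempty) : Nonempty (T ≃ₜ (ℕ → Bool)) := by
  have : CompactSpace T := isCompact_iff_compactSpace.1 hT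
  have hperfect : Perfect (f '' T) := by
    refine ⟨(hT.image hf).isClosed, ?_⟩
    rintro _ ⟨x, hx, rfl⟩
    simpa only [map_principal] using (hacc x hx).map hf.continuousAt hinj
  obtain ⟨h⟩ := nonempty_homeomorph_of_perfect hperfect (hne.image f)
  exact ⟨(Continuous.homeoOfEquivCompactToT2 (f := Equiv.Set.image f T hinj)
    ((hf.comp continuous_subtype_val).subtype_mk _)).trans h⟩

end CantorSpace

namespace Gluing

variable {C ι : Type*}

/-- The relation on `C ⊔ (ι × ℕ̄)` that glues the accumulation point `(i, ∞)` to `c i`. -/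
def GlueRel (c : ι → C) (x y : C ⊕ (ι × OnePoint ℕ)) : Prop :=
  ∃ i, x = .inl (c i) ∧ y = .inr (i, ∞)

theorem exists_quot_mk_glueRel (c : ι → C) (q : Quot (GlueRel c)) :
    (∃ x, q = Quot.mk _ (.inl x)) ∨ ∃ i, ∃ n : ℕ, q = Quot.mk _ (.inr (i, n)) := by
  obtain ⟨x | ⟨i, x⟩⟩ := q
  · exact .inl ⟨x, rfl⟩
  · induction x using OnePoint.rec with
    | infty => exact .inl ⟨c i, (Quot.sound ⟨i, rfl, rfl⟩).symm⟩
    | coe n => exact .inr ⟨i, n, rfl⟩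

variable {X : Type*} [TopologicalSpace X] [T2Space X] [TopologicalSpace C] [CompactSpace C]
  [TopologicalSpace ι] [DiscreteTopology ι] [Finite ι]
  {e : C → X} {c : ι → C} {s : ι → ℕ → X}

theorem nonempty_homeomorph_quot_glueRel (he : Continuous e) (he_inj : Function.Injective e)
    (hs : ∀ i, Tendsto (s i) atTop (𝓝 (e (c i))))
    (hs_inj : Function.Injective (Function.uncurry s)) (hdisj : ∀ i n, s i n ∉ range e)
    (hcover : ∀ x, x ∈ range e ∨ ∃ i n, s i n = x) :
    Nonempty (X ≃ₜ Quot (GlueRel c)) := by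
  let f : C ⊕ (ι × OnePoint ℕ) → X := Sum.elim e fun p => p.2.elim (e (c p.1)) (s p.1)
  have hf : Continuous f := he.sumElim <| continuous_prod_of_discrete_left.2 fun i =>
    (OnePoint.continuous_iff_from_nat _).2 (hs i)
  have hcompat : ∀ x y, GlueRel c x y → f x = f y := by
    rintro _ _ ⟨i, rfl, rfl⟩
    rfl
  let F : Quot (GlueRel c) → X := Quot.lift f hcompat
  have hinj : Function.Injective F := by
    intro q q' h
    obtain ⟨x, rfl⟩ | ⟨i, n, rfl⟩ := exists_quot_mk_glueRel c q <;>
      obtain ⟨x', rfl⟩ | ⟨i', n', rfl⟩ := exists_quot_mk_glueRel c q'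
    · exact congrArg _ (congrArg _ (he_inj h))
    · exact absurd ⟨x, h⟩ (hdisj i' n')
    · exact absurd ⟨x', h.symm⟩ (hdisj i n)
    · obtain ⟨rfl, rfl⟩ := Prod.ext_iff.1 (hs_inj (a₁ := (i, n)) (a₂ := (i', n')) h)
      rfl
  have hsurj : Function.Surjective F := by
    intro x
    obtain ⟨y, rfl⟩ | ⟨i, n, rfl⟩ := hcover x
    · exact ⟨Quot.mk _ (.inl y), rfl⟩
    · exact ⟨Quot.mk _ (.inr (i, n)), rfl⟩
  exact ⟨(Continuous.homeoOfEquivCompactToT2 (f := .ofBijective F ⟨hinj, hsurj⟩)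
    (continuous_quot_lift hcompat hf)).symm⟩

end Gluing

theorem isClosed_setOf_exists_mem {X Y : Type*} [TopologicalSpace X] [TopologicalSpace Y]
    {K : Set X} (hK : IsCompact K) {S : Set (Y × X)} (hS : IsClosed S) :
    IsClosed {y | ∃ x ∈ K, (y, x) ∈ S} := by
  have : CompactSpace K := isCompact_iff_compactSpace.1 hK
  have hcont : Continuous fun p : Y × K => (p.1, (p.2 : X)) := by fun_prop
  convert isClosedMap_fst_of_compactSpace (X := Y) (Y := K) _ (hS.preimage hcont)
  ext y
  simp

theorem prespectralSpace_of_totallyDisconnectedSpace (X : Type*) [TopologicalSpace X]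
    [LocallyCompactSpace X] [T2Space X] [TotallyDisconnectedSpace X] : PrespectralSpace X where
  isTopologicalBasis := by
    refine isTopologicalBasis_of_isOpen_of_nhds (fun _ h => h.1) fun x U hx hU => ?_
    obtain ⟨K, hK, hxK, hKU⟩ := exists_compact_subset hU hx
    obtain ⟨V, hV, hxV, hVK⟩ := loc_compact_Haus_tot_disc_of_zero_dim.exists_subset_of_mem_open
      hxK isOpen_interior
    have hVK' : V ⊆ K := hVK.trans interior_subset
    exact ⟨V, ⟨hV.isOpen, hK.of_isClosed_subset hV.isClosed hVK'⟩, hxV, hVK'.trans hKU⟩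

namespace ChabautySpace

variable {G Y : Type*} [Group G] [TopologicalSpace G]

theorem isOpen_setOf_inter_nonempty {U : Set G} (hU : IsOpen U) :
    IsOpen {H : ChabautySpace G | ((H.1 : Set G) ∩ U).Nonempty} :=
  isOpen_generateFrom_of_mem (.inr ⟨U, hU, rfl⟩)

theorem isClosed_setOf_inter_nonempty {K : Set G} (hK : IsCompact K) :
    IsClosed {H : ChabautySpace G | ((H.1 : Set G) ∩ K).Nonempty} := by
  refine ⟨isOpen_generateFrom_of_mem (.inl ⟨K, hK, ?_⟩)⟩
  ext H
  exact not_nonempty_iff_eq_empty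

theorem continuous_of_isClosed_graph [TopologicalSpace Y] {F : Y → ChabautySpace G}
    (hclosed : IsClosed {p : Y × G | p.2 ∈ (F p.1).1})
    (hopen : ∀ U : Set G, IsOpen U → IsOpen {y | (((F y).1 : Set G) ∩ U).Nonempty}) :
    Continuous F := by
  refine continuous_generateFrom_iff.2 ?_
  rintro _ (⟨K, hK, rfl⟩ | ⟨U, hU, rfl⟩)
  · convert (isClosed_setOf_exists_mem hK hclosed).isOpen_compl using 1
    ext y
    simp [eq_empty_iff_forall_notMem, imp_not_comm]
  · exact hopen U hU

theorem tendsto_of_subset_mul [IsTopologicalGroup G] [T2Space G] {l : Filter Y}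
    {F : Y → ChabautySpace G} {H : ChabautySpace G} {V : Y → Set G} (hH : IsCompact (H.1 : Set G))
    (hV : Tendsto V l (𝓝 1).smallSets) (hFH : ∀ y, ((F y).1 : Set G) ⊆ H.1 * V y)
    (hHF : ∀ y, (H.1 : Set G) ⊆ (F y).1 * V y) : Tendsto F l (𝓝 H) := by
  refine tendsto_nhds_generateFrom_iff.2 ?_
  rintro _ (⟨K, hK, rfl⟩ | ⟨U, hU, rfl⟩) hmem
  · obtain ⟨W, hW, hHW⟩ := compact_open_separated_mul_right hH hK.isClosed.isOpen_compl
      (disjoint_iff_inter_eq_empty.2 hmem).subset_compl_right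
    filter_upwards [tendsto_smallSets_iff.1 hV W hW] with y hy
    exact disjoint_iff_inter_eq_empty.1 <| subset_compl_iff_disjoint_right.1 <|
      (hFH y).trans <| (mul_subset_mul_left hy).trans hHW
  · obtain ⟨x, hx, hxU⟩ := hmem
    have hW : {v : G | x * v⁻¹ ∈ U} ∈ 𝓝 1 :=
      (hU.preimage (by fun_prop)).mem_nhds (by simpa using hxU)
    filter_upwards [tendsto_smallSets_iff.1 hV _ hW] with y hy
    obtain ⟨f, hf, v, hv, rfl⟩ := hHF y hx
    exact ⟨f, hf, by simpa using hy hv⟩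

theorem exists_continuous_injective_bool [PrespectralSpace G] [SecondCountableTopology G] :
    ∃ f : ChabautySpace G → ℕ → Bool, Continuous f ∧ Function.Injective f := by
  classical
  obtain ⟨B, hB, hBcount, hBbasis⟩ :=
    (PrespectralSpace.isTopologicalBasis (X := G)).exists_countable
  obtain ⟨b, rfl⟩ := hBcount.exists_eq_range
    ((hBbasis.exists_subset_of_mem_open (mem_univ 1) isOpen_univ).imp fun _ h => h.1)
  refine ⟨fun H n => boolIndicator {H : ChabautySpace G | ((H.1 : Set G) ∩ b n).Nonempty} H,
    continuous_pi fun n => ?_, ?_⟩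
  · obtain ⟨hopen, hcompact⟩ := hB (mem_range_self n)
    exact (continuous_boolIndicator_iff_isClopen _).2
      ⟨isClosed_setOf_inter_nonempty hcompact, isOpen_setOf_inter_nonempty hopen⟩
  · intro H H' h
    have hmeet (n : ℕ) : (b n ∩ H.1).Nonempty ↔ (b n ∩ H'.1).Nonempty := by
      have hn := congrFun h n
      simp only [boolIndicator, mem_ofPred_eq, inter_comm _ (b n)] at hn
      grind
    refine Subtype.ext (SetLike.coe_injective ?_)
    rw [← H.2.closure_eq, ← H'.2.closure_eq]
    ext x
    simp only [hBbasis.mem_closure_iff, forall_mem_range, hmeet]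

end ChabautySpace

theorem exists_eq_inf_ker_sup_zpowers {G C : Type*} [CommGroup G] [Group C] (f : G →* C)
    (H : Subgroup G) [IsCyclic (H.map f)] : ∃ g ∈ H, H = H ⊓ f.ker ⊔ Subgroup.zpowers g := by
  obtain ⟨⟨_, g, hg, rfl⟩, hgen⟩ := IsCyclic.exists_generator (α := H.map f)
  replace hg : g ∈ H := hg
  refine ⟨g, hg, le_antisymm (fun x hx => ?_) (sup_le inf_le_left (Subgroup.zpowers_le.2 hg))⟩
  obtain ⟨k, hk⟩ := hgen ⟨f x, Subgroup.mem_map_of_mem f hx⟩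
  have hfk : f g ^ k = f x := congrArg Subtype.val hk
  have hker : x * (g ^ k)⁻¹ ∈ f.ker := by
    rw [MonoidHom.mem_ker, map_mul, map_inv, map_zpow, hfk, mul_inv_cancel]
  exact Subgroup.mem_sup.2 ⟨x * (g ^ k)⁻¹,
    Subgroup.mem_inf.2 ⟨mul_mem hx (inv_mem (zpow_mem hg k)), hker⟩, g ^ k,
    Subgroup.zpow_mem_zpowers g k, inv_mul_cancel_right x _⟩

section CommGroup

variable {G : Type*} [CommGroup G] {N M : Subgroup G} {a b x : G}

theorem sup_zpowers_eq_of_mul_mem (h : a * b ∈ N) :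
    N ⊔ Subgroup.zpowers a = N ⊔ Subgroup.zpowers b := by
  suffices hle : ∀ {c d : G}, c * d ∈ N → N ⊔ Subgroup.zpowers c ≤ N ⊔ Subgroup.zpowers d from
    (hle h).antisymm (hle (mul_comm a b ▸ h))
  intro c d hcd
  refine sup_le le_sup_left (Subgroup.zpowers_le.2 ?_)
  rw [← mul_inv_cancel_right c d]
  exact mul_mem (Subgroup.mem_sup_left hcd)
    (Subgroup.mem_sup_right (inv_mem (Subgroup.mem_zpowers d)))

theorem mem_sup_zpowers_iff_of_sq_mem (ha : a ^ 2 ∈ N) :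
    x ∈ N ⊔ Subgroup.zpowers a ↔ x ∈ N ∨ x * a ∈ N := by
  constructor
  · intro hx
    obtain ⟨y, hy, _, ⟨k, rfl⟩, rfl⟩ := Subgroup.mem_sup.1 hx
    obtain ⟨j, rfl | rfl⟩ := Int.even_or_odd' k
    · exact .inl (mul_mem hy (by simpa [zpow_mul] using N.zpow_mem ha j))
    · right
      have hpow : a ^ (2 * j + 1) * a = (a ^ 2) ^ (j + 1) := by group
      simpa [mul_assoc, hpow] using mul_mem hy (N.zpow_mem ha (j + 1))
  · rintro (hx | hx)
    · exact Subgroup.mem_sup_left hx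
    · rw [← mul_inv_cancel_right x a]
      exact mul_mem (Subgroup.mem_sup_left hx)
        (Subgroup.mem_sup_right (inv_mem (Subgroup.mem_zpowers a)))

theorem sup_zpowers_inf_eq_of_sq_mem (hNM : N ≤ M) (ha : a ∉ M) (ha2 : a ^ 2 ∈ N) :
    (N ⊔ Subgroup.zpowers a) ⊓ M = N := by
  refine le_antisymm ?_ (le_inf le_sup_left hNM)
  rintro x ⟨hx, hxM⟩
  exact ((mem_sup_zpowers_iff_of_sq_mem ha2).1 hx).resolve_right fun hxa =>
    ha ((M.mul_mem_cancel_left hxM).1 (hNM hxa))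

end CommGroup

namespace NormedUnits

section NormedField

variable {K : Type*} [NormedField K]

/-- The subgroup of units of norm one. -/
def normOneUnits (K : Type*) [NormedField K] : Subgroup Kˣ :=
  (Units.map (normHom (α := K)).toMonoidHom).ker

@[simp]
theorem mem_normOneUnits {u : Kˣ} : u ∈ normOneUnits K ↔ ‖(u : K)‖ = 1 := Units.ext_iff

theorem le_normOneUnits_of_isCompact {S : Subgroup Kˣ} (hS : IsCompact (S : Set Kˣ)) :
    S ≤ normOneUnits K := by
  obtain ⟨M, hM⟩ := hS.bddAbove_image (Units.continuous_val.norm (E := K)).continuousOn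
  have hle {u : Kˣ} (hu : u ∈ S) : ‖(u : K)‖ ≤ 1 := by
    by_contra! h
    obtain ⟨n, hn⟩ := pow_unbounded_of_one_lt M h
    have := hM (mem_image_of_mem _ (pow_mem hu n))
    simp only [Units.val_pow_eq_pow_val, norm_pow] at this
    exact hn.not_ge this
  intro u hu
  refine mem_normOneUnits.2 ((hle hu).antisymm ?_)
  have hinv := hle (inv_mem hu)
  rw [Units.val_inv_eq_inv_val, norm_inv] at hinv
  exact (inv_le_one₀ (norm_pos_iff.2 u.ne_zero)).1 hinv

theorem isOpen_normOneUnits [IsUltrametricDist K] : IsOpen (normOneUnits K : Set Kˣ) := by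
  have hsphere := IsUltrametricDist.isOpen_sphere (0 : K) one_ne_zero
  convert hsphere.preimage Units.continuous_val using 1
  ext u
  simp

/-- The subgroup generated by `S` and `g`, where `g = 0` contributes nothing. Allowing `g = 0`
adds to the groups `S ⊔ ⟨g⟩` their limit `S` as `g` tends to `0`. -/
def supZPowers (S : Subgroup Kˣ) (g : K) : Subgroup Kˣ :=
  S ⊔ Subgroup.closure (Units.val ⁻¹' {g})

@[simp]
theorem supZPowers_zero (S : Subgroup Kˣ) : supZPowers S (0 : K) = S := by
  have : (Units.val ⁻¹' {0} : Set Kˣ) = ∅ := by ext u; simp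
  simp [supZPowers, this]

@[simp]
theorem supZPowers_val (S : Subgroup Kˣ) (u : Kˣ) :
    supZPowers S (u : K) = S ⊔ Subgroup.zpowers u := by
  have : (Units.val ⁻¹' {(u : K)} : Set Kˣ) = {u} := by ext v; simp [Units.ext_iff]
  rw [supZPowers, this, Subgroup.zpowers_eq_closure]

theorem le_supZPowers (S : Subgroup Kˣ) (g : K) : S ≤ supZPowers S g := le_sup_left

theorem mem_supZPowers_val (S : Subgroup Kˣ) (u : Kˣ) : u ∈ supZPowers S (u : K) := by
  rw [supZPowers_val]
  exact Subgroup.mem_sup_right (Subgroup.mem_zpowers u)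

theorem zpow_exponent_eq_zero {u l : Kˣ} {k : ℤ} (h : (u : K) = l * 0 ^ k) : k = 0 := by
  by_contra hk
  exact u.ne_zero (by rw [h, zero_zpow k hk, mul_zero])

theorem mem_supZPowers {S : Subgroup Kˣ} {g : K} {x : Kˣ} :
    x ∈ supZPowers S g ↔ ∃ l ∈ S, ∃ k : ℤ, (x : K) = l * g ^ k := by
  obtain rfl | hg := eq_or_ne g 0
  · rw [supZPowers_zero]
    refine ⟨fun hx => ⟨x, hx, 0, by simp⟩, ?_⟩
    rintro ⟨l, hl, k, hk⟩
    rw [zpow_exponent_eq_zero hk, zpow_zero, mul_one] at hk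
    rwa [Units.ext hk]
  · lift g to Kˣ using hg.isUnit
    simp [Subgroup.mem_sup, ← Units.val_zpow_eq_zpow_val, ← Units.val_mul, Subgroup.mem_zpowers_iff,
      Units.val_inj, eq_comm (a := x)]

theorem supZPowers_inf_normOneUnits {S : Subgroup Kˣ} {g : K} (hS : S ≤ normOneUnits K)
    (hg : ‖g‖ < 1) : supZPowers S g ⊓ normOneUnits K = S := by
  refine le_antisymm ?_ (le_inf (le_supZPowers S g) hS)
  rintro x ⟨hx, hx1⟩
  obtain ⟨l, hl, k, hk⟩ := mem_supZPowers.1 hx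
  have hk0 : k = 0 := by
    obtain rfl | _ := eq_or_ne g 0
    · exact zpow_exponent_eq_zero hk
    · have hnorm : ‖g‖ ^ k = 1 := by
        rw [← norm_zpow, ← mem_normOneUnits.1 hx1, hk, norm_mul, mem_normOneUnits.1 (hS hl),
          one_mul]
      exact (zpow_eq_one_iff_right₀ (norm_nonneg g) hg.ne).1 hnorm
  rw [hk0, zpow_zero, mul_one] at hk
  rwa [Units.ext hk]

theorem not_isOpen_supZPowers [IsUltrametricDist K] {S : Subgroup Kˣ} {g : K}
    (hS : S ≤ normOneUnits K) (hg : ‖g‖ < 1) (hopen : ¬IsOpen (S : Set Kˣ)) :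
    ¬IsOpen (supZPowers S g : Set Kˣ) := fun h =>
  hopen (supZPowers_inf_normOneUnits hS hg ▸ h.inter isOpen_normOneUnits)

theorem isOpen_setOf_supZPowers_inter_nonempty (S : Subgroup Kˣ) {U : Set Kˣ} (hU : IsOpen U) :
    IsOpen {g : K | ((supZPowers S g : Set Kˣ) ∩ U).Nonempty} := by
  obtain ⟨O, hO, rfl⟩ := Units.isEmbedding_val₀.isOpen_iff.1 hU
  refine isOpen_iff_mem_nhds.2 ?_
  rintro g ⟨x, hx, hxO⟩
  obtain ⟨l, hl, k, hk⟩ := mem_supZPowers.1 hx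
  have hgk : g ≠ 0 ∨ 0 ≤ k := or_iff_not_imp_left.2 fun hg =>
    (zpow_exponent_eq_zero (by rwa [not_not.1 hg] at hk)).ge
  have hcont : ContinuousAt (fun g' : K => (l : K) * g' ^ k) g :=
    continuousAt_const.mul (continuousAt_id.zpow₀ k hgk)
  filter_upwards [hcont.preimage_mem_nhds (hO.mem_nhds (hk ▸ hxO)),
    hcont.eventually_ne (hk ▸ x.ne_zero)] with g' hg'O hg'0
  exact ⟨Units.mk0 _ hg'0, mem_supZPowers.2 ⟨l, hl, k, rfl⟩, hg'O⟩

theorem isClosed_setOf_exists_eq_mul_pow {S : Subgroup Kˣ} (hS : IsCompact (S : Set Kˣ)) :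
    IsClosed {p : Metric.ball (0 : K) 1 × Kˣ | ∃ n : ℕ, ∃ l ∈ S, (p.2 : K) = l * p.1 ^ n} := by
  have hS1 := le_normOneUnits_of_isCompact hS
  -- Near `(g, x)` only finitely many `n` occur: `‖g'‖ ^ n` is small for large `n` and `x ≠ 0`.
  rw [ofPred_exists]
  refine LocallyFinite.isClosed_iUnion ?_ fun n => isClosed_setOf_exists_mem hS
    (S := {p : (Metric.ball (0 : K) 1 × Kˣ) × Kˣ | (p.1.2 : K) = p.2 * p.1.1 ^ n})
    (isClosed_eq (by fun_prop) (by fun_prop))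
  rintro ⟨g, x⟩
  obtain ⟨r, hgr, hr⟩ := exists_between (mem_ball_zero_iff.1 g.2)
  obtain ⟨a, ha, hax⟩ := exists_between (norm_pos_iff.2 x.ne_zero)
  obtain ⟨N, hN⟩ := exists_pow_lt_of_lt_one ha hr
  have hopen : IsOpen {p : Metric.ball (0 : K) 1 × Kˣ | ‖(p.1 : K)‖ < r ∧ a < ‖(p.2 : K)‖} :=
    .and (isOpen_lt (by fun_prop) (by fun_prop)) (isOpen_lt (by fun_prop) (by fun_prop))
  refine ⟨_, hopen.mem_nhds ⟨hgr, hax⟩, (finite_lt_nat N).subset ?_⟩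
  rintro n ⟨⟨g', x'⟩, ⟨l, hl, hx'⟩, hg'r, hax'⟩
  by_contra hNn
  have hlt : ‖(x' : K)‖ < a := by
    dsimp only at hx'
    calc ‖(x' : K)‖ = ‖(g' : K)‖ ^ n := by
          rw [hx', norm_mul, mem_normOneUnits.1 (hS1 hl), one_mul, norm_pow]
      _ ≤ r ^ n := by gcongr
      _ ≤ r ^ N := pow_le_pow_of_le_one ((norm_nonneg _).trans hgr.le) hr.le (not_lt.1 hNn)
      _ < a := hN
  exact hlt.not_gt hax'

theorem isClosed_setOf_mem_supZPowers {S : Subgroup Kˣ} (hS : IsCompact (S : Set Kˣ)) :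
    IsClosed {p : Metric.ball (0 : K) 1 × Kˣ | p.2 ∈ supZPowers S (p.1 : K)} := by
  have hpow := isClosed_setOf_exists_eq_mul_pow hS
  have hinv : Continuous fun p : Metric.ball (0 : K) 1 × Kˣ => (p.1, p.2⁻¹) := by fun_prop
  convert hpow.union (hpow.preimage hinv) using 1
  ext ⟨g, x⟩
  simp only [mem_ofPred_eq, mem_union, mem_preimage, mem_supZPowers]
  constructor
  · rintro ⟨l, hl, k, hk⟩
    obtain ⟨n, rfl | rfl⟩ := Int.eq_nat_or_neg k
    · exact .inl ⟨n, l, hl, mod_cast hk⟩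
    · exact .inr ⟨n, l⁻¹, inv_mem hl, by simp [hk, mul_comm]⟩
  · rintro (⟨n, l, hl, hn⟩ | ⟨n, l, hl, hn⟩)
    · exact ⟨l, hl, n, mod_cast hn⟩
    · refine ⟨l⁻¹, inv_mem hl, -n, inv_injective ?_⟩
      simpa [mul_comm] using hn

theorem isClosed_supZPowers {S : Subgroup Kˣ} (hS : IsCompact (S : Set Kˣ)) {g : K}
    (hg : ‖g‖ < 1) : IsClosed (supZPowers S g : Set Kˣ) :=
  (isClosed_setOf_mem_supZPowers hS).preimage
    (Continuous.prodMk_right (⟨g, mem_ball_zero_iff.2 hg⟩ : Metric.ball (0 : K) 1))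

/-- The family `g ↦ S ⊔ ⟨g⟩` on the open unit ball as a map into the Chabauty space. -/
def supZPowersPoint {S : Subgroup Kˣ} (hS : IsCompact (S : Set Kˣ)) (g : Metric.ball (0 : K) 1) :
    ChabautySpace Kˣ :=
  ⟨supZPowers S (g : K), isClosed_supZPowers hS (mem_ball_zero_iff.1 g.2)⟩

theorem continuous_supZPowersPoint {S : Subgroup Kˣ} (hS : IsCompact (S : Set Kˣ)) :
    Continuous (supZPowersPoint hS) :=
  ChabautySpace.continuous_of_isClosed_graph (isClosed_setOf_mem_supZPowers hS) fun _ hU =>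
    (isOpen_setOf_supZPowers_inter_nonempty S hU).preimage continuous_subtype_val

end NormedField

section NontriviallyNormedField

variable {K : Type*} [NontriviallyNormedField K] {H S : Subgroup Kˣ}

theorem isOpen_of_eventually_mem {g : K} (h : ∀ᶠ y in 𝓝 g, ∀ u : Kˣ, (u : K) = y → u ∈ H) :
    IsOpen (H : Set Kˣ) := by
  obtain ⟨y, hy0, hy⟩ := (dense_compl_singleton (0 : K)).inter_nhds_nonempty
    (eventually_eventually_nhds.2 h)
  lift y to Kˣ using IsUnit.mk0 y hy0
  refine H.isOpen_of_mem_nhds (g := y) ?_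
  filter_upwards [Units.continuous_val.continuousAt.eventually hy] with u hu
  exact hu u rfl

theorem accPt_supZPowersPoint (hS : IsCompact (S : Set Kˣ)) (g : Metric.ball (0 : K) 1)
    (hg : ¬IsOpen (supZPowers S (g : K) : Set Kˣ)) :
    AccPt (supZPowersPoint hS g) (𝓟 (range (supZPowersPoint hS))) := by
  refine accPt_iff_frequently.2 ((continuous_supZPowersPoint hS).continuousAt.frequently ?_)
  simp only [mem_range_self, and_true]
  -- If `S ⊔ ⟨y⟩ = S ⊔ ⟨g⟩` for all `y` near `g`, this group contains a ball.
  contrapose! hg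
  refine isOpen_of_eventually_mem (g := (g : K)) ?_
  rw [← Metric.isOpen_ball.isOpenEmbedding_subtypeVal.map_nhds_eq g, eventually_map]
  filter_upwards [hg] with y hy u huy
  have heq : supZPowers S (y : K) = supZPowers S (g : K) := congrArg Subtype.val hy
  exact heq ▸ huy ▸ mem_supZPowers_val S u

theorem index_eq_zero_of_le_normOneUnits (hH : H ≤ normOneUnits K) : H.index = 0 := by
  by_contra h
  obtain ⟨x, hx⟩ := NormedField.exists_one_lt_norm K
  have hx0 : x ≠ 0 := norm_pos_iff.1 (one_pos.trans hx)
  obtain ⟨n, hn, -, hmem⟩ := Subgroup.exists_pow_mem_of_index_ne_zero h (Units.mk0 x hx0)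
  have hnorm : ‖x‖ ^ n = 1 := by simpa using hH hmem
  exact (one_lt_pow₀ hx hn.ne').ne' hnorm

theorem isCompact_setOf_norm_mem_Icc [ProperSpace K] {a : ℝ} (ha : 0 < a) (b : ℝ) :
    IsCompact {u : Kˣ | ‖(u : K)‖ ∈ Icc a b} := by
  rw [Units.isEmbedding_val₀.isCompact_iff]
  have himage : Units.val '' {u : Kˣ | ‖(u : K)‖ ∈ Icc a b} = {x : K | ‖x‖ ∈ Icc a b} := by
    ext x
    refine ⟨?_, fun hx => ⟨Units.mk0 x (norm_pos_iff.1 (ha.trans_le hx.1)), hx, rfl⟩⟩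
    rintro ⟨u, hu, rfl⟩
    exact hu
  rw [himage]
  refine Metric.isCompact_of_isClosed_isBounded (isClosed_Icc.preimage continuous_norm) ?_
  exact (Metric.isBounded_closedBall (x := (0 : K)) (r := b)).subset fun x hx => by simpa using hx.2

theorem index_ne_zero_of_isOpen [ProperSpace K] (hH : IsOpen (H : Set Kˣ)) {h : Kˣ} (hh : h ∈ H)
    (hh1 : ‖(h : K)‖ ≠ 1) : H.index ≠ 0 := by
  wlog h1 : 1 < ‖(h : K)‖ generalizing h
  · refine this (inv_mem hh) ?_ ?_ <;> rw [Units.val_inv_eq_inv_val, norm_inv]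
    · exact inv_ne_one.2 hh1
    · exact (one_lt_inv₀ (norm_pos_iff.2 h.ne_zero)).2 (lt_of_le_of_ne (not_lt.1 h1) hh1)
  have hcompact : IsCompact ((↑) '' {u : Kˣ | ‖(u : K)‖ ∈ Icc 1 ‖(h : K)‖} : Set (Kˣ ⧸ H)) :=
    (isCompact_setOf_norm_mem_Icc one_pos _).image continuous_quotient_mk'
  have huniv : ((↑) '' {u : Kˣ | ‖(u : K)‖ ∈ Icc 1 ‖(h : K)‖} : Set (Kˣ ⧸ H)) = univ := by
    refine eq_univ_of_forall (QuotientGroup.mk_surjective.forall.2 fun x => ?_)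
    obtain ⟨k, hk, hk'⟩ := exists_mem_Ico_zpow (norm_pos_iff.2 x.ne_zero) h1
    refine ⟨x * (h ^ k)⁻¹, ?_, QuotientGroup.mk_mul_of_mem x (inv_mem (zpow_mem hh k))⟩
    have hpos : 0 < ‖(h : K)‖ ^ k := zpow_pos (one_pos.trans h1) k
    have hnorm : ‖((x * (h ^ k)⁻¹ : Kˣ) : K)‖ = ‖(x : K)‖ / ‖(h : K)‖ ^ k := by
      simp [div_eq_mul_inv]
    rw [zpow_add_one₀ (norm_ne_zero_iff.2 h.ne_zero)] at hk'
    rw [mem_ofPred_eq, hnorm]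
    exact ⟨(one_le_div hpos).2 hk, (div_le_iff₀' hpos).2 hk'.le⟩
  have : DiscreteTopology (Kˣ ⧸ H) := QuotientGroup.discreteTopology hH
  have : Finite (Kˣ ⧸ H) := finite_univ_iff.1 (huniv ▸ hcompact.finite_of_discrete)
  exact H.index_ne_zero_of_finite

end NontriviallyNormedField

theorem exists_eq_supZPowers {K : Type*} [NormedField K] (H : Subgroup Kˣ)
    [IsCyclic (H.map (Units.map (normHom (α := K)).toMonoidHom))] :
    ∃ g : K, ‖g‖ < 1 ∧ H = supZPowers (H ⊓ normOneUnits K) g := by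
  obtain ⟨g, hg, hH⟩ := exists_eq_inf_ker_sup_zpowers (Units.map (normHom (α := K)).toMonoidHom) H
  obtain hlt | heq | hgt := lt_trichotomy ‖(g : K)‖ 1
  · exact ⟨g, hlt, hH.trans (supZPowers_val _ g).symm⟩
  · refine ⟨0, by simp, hH.trans ?_⟩
    rw [supZPowers_zero]
    exact sup_eq_left.2 (Subgroup.zpowers_le.2 (Subgroup.mem_inf.2 ⟨hg, mem_normOneUnits.2 heq⟩))
  · refine ⟨(g⁻¹ : Kˣ), ?_, hH.trans ?_⟩
    · simpa using inv_lt_one_of_one_lt₀ hgt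
    · rw [supZPowers_val, Subgroup.zpowers_inv]
      rfl

section PrincipalUnits

variable (K : Type*) [NormedField K] [IsUltrametricDist K]

/-- The group of units of norm one at distance at most `r` from `1`; for `r < 1` this is
the closed ball of radius `r` around `1`. -/
def principalUnits (r : ℝ≥0) : Subgroup Kˣ where
  carrier := {u | ‖(u : K)‖ = 1 ∧ ‖(u : K) - 1‖ ≤ r}
  one_mem' := by simp
  mul_mem' {u v} := by
    rintro ⟨hu, hu1⟩ ⟨hv, hv1⟩
    refine ⟨by simp [hu, hv], ?_⟩
    calc ‖((u * v : Kˣ) : K) - 1‖ = ‖(u : K) * (v - 1) + (u - 1)‖ := by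
          congr 1; push_cast; ring
      _ ≤ max ‖(u : K) * (v - 1)‖ ‖(u : K) - 1‖ := IsUltrametricDist.norm_add_le_max _ _
      _ ≤ r := max_le (by rwa [norm_mul, hu, one_mul]) hu1
  inv_mem' {u} := by
    rintro ⟨hu, hu1⟩
    refine ⟨by simp [hu], ?_⟩
    calc ‖((u⁻¹ : Kˣ) : K) - 1‖ = ‖(u : K)⁻¹ * (1 - u)‖ := by
          rw [mul_sub, inv_mul_cancel₀ u.ne_zero, mul_one, Units.val_inv_eq_inv_val]
      _ = ‖(u : K) - 1‖ := by rw [norm_mul, norm_inv, hu, inv_one, one_mul, norm_sub_rev]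
      _ ≤ r := hu1

variable {K}

theorem mem_principalUnits {r : ℝ≥0} (hr : r < 1) {u : Kˣ} :
    u ∈ principalUnits K r ↔ ‖(u : K) - 1‖ ≤ r := by
  refine ⟨And.right, fun h => ⟨?_, h⟩⟩
  have hlt : ‖(u : K) - 1‖ < ‖(1 : K)‖ := by
    rw [norm_one]
    exact h.trans_lt (mod_cast hr)
  rw [← norm_one (α := K), ← sub_add_cancel (u : K) 1,
    IsUltrametricDist.norm_add_eq_max_of_norm_ne_norm hlt.ne, max_eq_right hlt.le]

theorem principalUnits_le_normOneUnits (r : ℝ≥0) : principalUnits K r ≤ normOneUnits K :=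
  fun _ hu => mem_normOneUnits.2 hu.1

theorem principalUnits_mono : Monotone (principalUnits K) :=
  fun _ _ h _ hu => ⟨hu.1, hu.2.trans (mod_cast h)⟩

theorem isOpen_principalUnits {r : ℝ≥0} (hr : r ≠ 0) : IsOpen (principalUnits K r : Set Kˣ) := by
  have hball := IsUltrametricDist.isOpen_closedBall (1 : K) (NNReal.coe_ne_zero.2 hr)
  convert isOpen_normOneUnits.inter (hball.preimage Units.continuous_val) using 1
  ext u
  simp only [mem_inter_iff, SetLike.mem_coe, mem_normOneUnits, mem_preimage,
    mem_closedBall_iff_norm]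
  rfl

theorem tendsto_principalUnits :
    Tendsto (fun r => (principalUnits K r : Set Kˣ)) (𝓝 0) (𝓝 1).smallSets := by
  refine tendsto_smallSets_iff.2 fun U hU => ?_
  rw [Units.isEmbedding_val₀.nhds_eq_comap] at hU
  obtain ⟨W, hW, hWU⟩ := hU
  obtain ⟨ε, hε, hεW⟩ := Metric.mem_nhds_iff.1 hW
  filter_upwards [eventually_lt_nhds (Real.toNNReal_pos.2 hε)] with r hr u hu
  exact hWU (hεW (mem_ball_iff_norm.2 (hu.2.trans_lt (Real.lt_toNNReal_iff_coe_lt.1 hr))))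

end PrincipalUnits

end NormedUnits

namespace PadicUnits

open NormedUnits

section Padic

variable {p : ℕ} [Fact p.Prime]

instance isCyclic_map_norm (H : Subgroup ℚ_[p]ˣ) :
    IsCyclic (H.map (Units.map (normHom (α := ℚ_[p])).toMonoidHom)) := by
  have hp : (p : ℝ) ≠ 0 := mod_cast (Fact.out : p.Prime).ne_zero
  refine Subgroup.isCyclic_of_le (H' := Subgroup.zpowers (Units.mk0 (p : ℝ) hp)) ?_
  rintro _ ⟨u, -, rfl⟩
  refine ⟨-(u : ℚ_[p]).valuation, Units.ext ?_⟩
  simpa using (Padic.norm_eq_zpow_neg_valuation u.ne_zero).symm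

theorem norm_le_div_of_norm_lt {x y : ℚ_[p]} (h : ‖x‖ < ‖y‖) : ‖x‖ ≤ ‖y‖ / p := by
  have hp : (p : ℝ) ≠ 0 := mod_cast (Fact.out : p.Prime).ne_zero
  have hy : y ≠ 0 := norm_pos_iff.1 ((norm_nonneg x).trans_lt h)
  rw [Padic.norm_eq_zpow_neg_valuation hy] at h ⊢
  rw [div_eq_mul_inv, ← zpow_sub_one₀ hp, Padic.norm_le_pow_iff_norm_lt_pow_add_one, sub_add_cancel]
  exact h

end Padic

theorem norm_two : ‖(2 : ℚ_[2])‖ = 2⁻¹ := by simpa using Padic.norm_p (p := 2)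

theorem norm_two_pow (n : ℕ) : ‖(2 : ℚ_[2]) ^ n‖ = 2⁻¹ ^ n := by rw [norm_pow, norm_two]

theorem norm_one_add_lt_one {z : ℚ_[2]} (hz : ‖z‖ = 1) : ‖1 + z‖ < 1 := by
  obtain ⟨n, hn, hzn⟩ := PadicInt.exists_mem_range (⟨z, hz.le⟩ : ℤ_[2])
  have hlt : ‖z - n‖ < 1 := PadicInt.mem_nonunits.1 hzn
  obtain rfl | rfl : n = 0 ∨ n = 1 := by lia
  · exact absurd hz (by simpa using hlt.ne)
  · calc ‖1 + z‖ = ‖(z - (1 : ℕ)) + 2‖ := by congr 1; push_cast; ring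
      _ ≤ max ‖z - (1 : ℕ)‖ ‖(2 : ℚ_[2])‖ := Padic.nonarchimedean _ _
      _ < 1 := max_lt hlt (by rw [norm_two]; norm_num)

theorem norm_add_le_half {x y : ℚ_[2]} (h : ‖x‖ = ‖y‖) : ‖x + y‖ ≤ ‖x‖ / 2 := by
  obtain rfl | hx := eq_or_ne x 0
  · have hy : y = 0 := by simpa using h.symm
    simp [hy]
  · have hx' := norm_pos_iff.2 hx
    refine norm_le_div_of_norm_lt (p := 2) ?_
    have hquot : ‖1 + y / x‖ < 1 :=
      norm_one_add_lt_one (by rw [norm_div, ← h, div_self hx'.ne'])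
    calc ‖x + y‖ = ‖x‖ * ‖1 + y / x‖ := by rw [← norm_mul]; congr 1; field_simp
      _ < ‖x‖ := mul_lt_of_lt_one_right hx' hquot

theorem norm_mul_sub_one_le_half {u v : ℚ_[2]} (h : ‖u - 1‖ = ‖v - 1‖) (hu : ‖u - 1‖ ≤ 1 / 2) :
    ‖u * v - 1‖ ≤ ‖u - 1‖ / 2 := by
  calc ‖u * v - 1‖ = ‖(u - 1 + (v - 1)) + (u - 1) * (v - 1)‖ := by congr 1; ring
    _ ≤ max ‖u - 1 + (v - 1)‖ ‖(u - 1) * (v - 1)‖ := Padic.nonarchimedean _ _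
    _ ≤ ‖u - 1‖ / 2 := max_le (norm_add_le_half h) (by
        rw [norm_mul, ← h]
        nlinarith [norm_nonneg (u - 1)])

theorem norm_sq_sub_one {u : ℚ_[2]} (hu : ‖u - 1‖ ≤ 1 / 4) : ‖u ^ 2 - 1‖ = ‖u - 1‖ / 2 := by
  have hne : ‖u - 1‖ ≠ ‖(2 : ℚ_[2])‖ := by rw [norm_two]; linarith
  have hadd : ‖u + 1‖ = 1 / 2 := by
    calc ‖u + 1‖ = ‖(u - 1) + 2‖ := by congr 1; ring
      _ = max ‖u - 1‖ ‖(2 : ℚ_[2])‖ := IsUltrametricDist.norm_add_eq_max_of_norm_ne_norm hne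
      _ = 1 / 2 := by rw [norm_two, max_eq_right (by linarith), one_div]
  calc ‖u ^ 2 - 1‖ = ‖(u - 1) * (u + 1)‖ := by congr 1; ring
    _ = ‖u - 1‖ / 2 := by rw [norm_mul, hadd, mul_one_div]

theorem norm_pow_two_pow_sub_one {u : ℚ_[2]} (hu : ‖u - 1‖ ≤ 1 / 4) (k : ℕ) :
    ‖u ^ 2 ^ k - 1‖ = ‖u - 1‖ / 2 ^ k := by
  induction k with
  | zero => simp
  | succ k ih =>
    have hle : ‖u ^ 2 ^ k - 1‖ ≤ 1 / 4 :=
      (ih.trans_le (div_le_self (norm_nonneg _) (one_le_pow₀ one_le_two))).trans hu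
    rw [pow_succ 2 k, pow_mul, norm_sq_sub_one hle, ih, pow_succ, div_div]

theorem exists_norm_mul_sub_one_le {H : Subgroup ℚ_[2]ˣ} {g : ℚ_[2]ˣ} (hgH : g ∈ H)
    (hg : ‖(g : ℚ_[2]) - 1‖ ≤ 1 / 4) {x : ℚ_[2]ˣ} (hx : ‖(x : ℚ_[2]) - 1‖ ≤ ‖(g : ℚ_[2]) - 1‖)
    (k : ℕ) : ∃ h ∈ H, ‖(x * h : ℚ_[2]) - 1‖ ≤ ‖(g : ℚ_[2]) - 1‖ / 2 ^ k := by
  induction k with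
  | zero => exact ⟨1, one_mem H, by simpa using hx⟩
  | succ k ih =>
    obtain ⟨h, hh, hxh⟩ := ih
    have hpow := norm_pow_two_pow_sub_one hg k
    rw [← hpow] at hxh
    rw [pow_succ, ← div_div, ← hpow]
    -- `g ^ 2 ^ k` is at distance `‖g - 1‖ / 2 ^ k` from `1`, so it can fix the next binary digit.
    obtain hlt | heq := hxh.lt_or_eq
    · exact ⟨h, hh, norm_le_div_of_norm_lt (p := 2) hlt⟩
    · refine ⟨h * g ^ 2 ^ k, mul_mem hh (pow_mem hgH _), ?_⟩
      have hhalf : ‖(x * h : ℚ_[2]) - 1‖ ≤ 1 / 2 := by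
        rw [heq, hpow]
        exact (div_le_self (norm_nonneg _) (one_le_pow₀ one_le_two)).trans (by linarith)
      simpa only [Units.val_mul, Units.val_pow_eq_pow_val, mul_assoc, heq] using
        norm_mul_sub_one_le_half heq hhalf

theorem mem_of_norm_sub_one_le {H : Subgroup ℚ_[2]ˣ} (hH : IsClosed (H : Set ℚ_[2]ˣ))
    {g : ℚ_[2]ˣ} (hgH : g ∈ H) (hg : ‖(g : ℚ_[2]) - 1‖ ≤ 1 / 4) {x : ℚ_[2]ˣ}
    (hx : ‖(x : ℚ_[2]) - 1‖ ≤ ‖(g : ℚ_[2]) - 1‖) : x ∈ H := by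
  choose h hh hxh using exists_norm_mul_sub_one_le hgH hg hx
  have hbound : Tendsto (fun k => ‖(g : ℚ_[2]) - 1‖ / 2 ^ k) atTop (𝓝 0) :=
    tendsto_const_nhds.div_atTop (tendsto_pow_atTop_atTop_of_one_lt one_lt_two)
  have hone : Tendsto (fun k => x * h k) atTop (𝓝 1) := by
    rw [Units.isEmbedding_val₀.tendsto_nhds_iff, tendsto_iff_norm_sub_tendsto_zero]
    exact squeeze_zero (fun k => norm_nonneg _) hxh hbound
  have hlim : Tendsto (fun k => (h k)⁻¹) atTop (𝓝 x) := by
    simpa using (hone.inv).mul_const x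
  exact hH.mem_of_tendsto hlim (Eventually.of_forall fun k => inv_mem (hh k))

/-- The group `1 + 2 ^ (n + 2) ℤ₂`, indexed so that `n = 0` gives a complement of `{1, -1}` in
`ℤ₂ˣ`. -/
noncomputable def dyadicUnits (n : ℕ) : Subgroup ℚ_[2]ˣ := principalUnits ℚ_[2] (2⁻¹ ^ (n + 2))

theorem mem_dyadicUnits {n : ℕ} {u : ℚ_[2]ˣ} :
    u ∈ dyadicUnits n ↔ ‖(u : ℚ_[2]) - 1‖ ≤ 2⁻¹ ^ (n + 2) := by
  rw [dyadicUnits, mem_principalUnits (pow_lt_one₀ zero_le two_inv_lt_one (by simp))]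
  simp

theorem dyadicUnits_antitone : Antitone dyadicUnits := fun _ _ h =>
  principalUnits_mono (pow_le_pow_of_le_one zero_le two_inv_lt_one.le (by lia))

theorem dyadicUnits_le_normOneUnits (n : ℕ) : dyadicUnits n ≤ normOneUnits ℚ_[2] :=
  principalUnits_le_normOneUnits _

theorem isOpen_dyadicUnits (n : ℕ) : IsOpen (dyadicUnits n : Set ℚ_[2]ˣ) :=
  isOpen_principalUnits (by positivity)

theorem tendsto_dyadicUnits :
    Tendsto (fun n => (dyadicUnits n : Set ℚ_[2]ˣ)) atTop (𝓝 1).smallSets :=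
  tendsto_principalUnits.comp <| (tendsto_add_atTop_iff_nat 2).2 <|
    NNReal.tendsto_pow_atTop_nhds_zero_of_lt_one two_inv_lt_one

theorem norm_sub_one_le_quarter {u : ℚ_[2]ˣ} (hu : u ∈ dyadicUnits 0) :
    ‖(u : ℚ_[2]) - 1‖ ≤ 1 / 4 :=
  (mem_dyadicUnits.1 hu).trans (by norm_num)

theorem mem_or_neg_mem_dyadicUnits_zero {u : ℚ_[2]ˣ} (hu : u ∈ normOneUnits ℚ_[2]) :
    u ∈ dyadicUnits 0 ∨ -u ∈ dyadicUnits 0 := by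
  have hle : ‖1 + (u : ℚ_[2])‖ ≤ ‖(2 : ℚ_[2])‖ := by
    have hlt : ‖1 + (u : ℚ_[2])‖ < ‖(1 : ℚ_[2])‖ := by
      rw [norm_one]
      exact norm_one_add_lt_one (mem_normOneUnits.1 hu)
    simpa [norm_two] using norm_le_div_of_norm_lt hlt
  simp only [mem_dyadicUnits, Units.val_neg]
  obtain hlt | heq := hle.lt_or_eq
  · right
    calc ‖-(u : ℚ_[2]) - 1‖ = ‖1 + (u : ℚ_[2])‖ := by rw [← norm_neg]; congr 1; ring
      _ ≤ ‖(2 : ℚ_[2])‖ / (2 : ℕ) := norm_le_div_of_norm_lt hlt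
      _ = 2⁻¹ ^ (0 + 2) := by rw [norm_two]; norm_num
  · left
    calc ‖(u : ℚ_[2]) - 1‖ = ‖1 + (u : ℚ_[2]) + -2‖ := by congr 1; ring
      _ ≤ ‖1 + (u : ℚ_[2])‖ / 2 := norm_add_le_half (heq.trans (norm_neg 2).symm)
      _ = 2⁻¹ ^ (0 + 2) := by rw [heq, norm_two]; norm_num

theorem neg_notMem_dyadicUnits_zero {u : ℚ_[2]ˣ} (hu : u ∈ dyadicUnits 0) :
    -u ∉ dyadicUnits 0 := fun hneg => by
  have hle : ‖(2 : ℚ_[2])‖ ≤ 1 / 4 := by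
    calc ‖(2 : ℚ_[2])‖ = ‖((-u : ℚ_[2]ˣ) : ℚ_[2]) - 1 + ((u : ℚ_[2]) - 1)‖ := by
          rw [← norm_neg]; congr 1; push_cast; ring
      _ ≤ max ‖((-u : ℚ_[2]ˣ) : ℚ_[2]) - 1‖ ‖(u : ℚ_[2]) - 1‖ := Padic.nonarchimedean _ _
      _ ≤ 1 / 4 := max_le (norm_sub_one_le_quarter hneg) (norm_sub_one_le_quarter hu)
  rw [norm_two] at hle
  norm_num at hle

theorem sq_mem_dyadicUnits_succ_iff {n : ℕ} {u : ℚ_[2]ˣ} (hu : u ∈ dyadicUnits 0) :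
    u ^ 2 ∈ dyadicUnits (n + 1) ↔ u ∈ dyadicUnits n := by
  rw [mem_dyadicUnits, mem_dyadicUnits, Units.val_pow_eq_pow_val,
    norm_sq_sub_one (norm_sub_one_le_quarter hu), add_right_comm n 1 2, pow_succ _ (n + 2),
    div_eq_mul_inv, mul_le_mul_iff_of_pos_right (by norm_num)]

theorem norm_sub_one_eq_of_notMem_succ {n : ℕ} {u : ℚ_[2]ˣ} (hu : u ∈ dyadicUnits n)
    (hu' : u ∉ dyadicUnits (n + 1)) : ‖(u : ℚ_[2]) - 1‖ = 2⁻¹ ^ (n + 2) := by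
  refine (mem_dyadicUnits.1 hu).antisymm (not_lt.1 fun hlt => hu' (mem_dyadicUnits.2 ?_))
  rw [← norm_two_pow] at hlt
  calc ‖(u : ℚ_[2]) - 1‖ ≤ ‖(2 : ℚ_[2]) ^ (n + 2)‖ / (2 : ℕ) := norm_le_div_of_norm_lt hlt
    _ = 2⁻¹ ^ (n + 1 + 2) := by rw [norm_two_pow]; push_cast; ring

theorem mul_mem_dyadicUnits_succ {n : ℕ} {u v : ℚ_[2]ˣ} (hu : u ∈ dyadicUnits n)
    (hu' : u ∉ dyadicUnits (n + 1)) (hv : v ∈ dyadicUnits n) (hv' : v ∉ dyadicUnits (n + 1)) :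
    u * v ∈ dyadicUnits (n + 1) := by
  have hnorm := norm_sub_one_eq_of_notMem_succ hu hu'
  have hquarter := norm_sub_one_le_quarter (dyadicUnits_antitone n.zero_le hu)
  refine mem_dyadicUnits.2 ?_
  calc ‖((u * v : ℚ_[2]ˣ) : ℚ_[2]) - 1‖ ≤ ‖(u : ℚ_[2]) - 1‖ / 2 :=
        norm_mul_sub_one_le_half (hnorm.trans (norm_sub_one_eq_of_notMem_succ hv hv').symm)
          (hquarter.trans (by norm_num))
    _ = 2⁻¹ ^ (n + 1 + 2) := by rw [hnorm]; ring

theorem exists_mem_notMem_dyadicUnits_succ {u : ℚ_[2]ˣ} (hu : u ∈ dyadicUnits 0) (hu1 : u ≠ 1) :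
    ∃ n, u ∈ dyadicUnits n ∧ u ∉ dyadicUnits (n + 1) := by
  have hpos : 0 < ‖(u : ℚ_[2]) - 1‖ := norm_pos_iff.2 (sub_ne_zero.2 (Units.val_eq_one.not.2 hu1))
  obtain ⟨N, hN⟩ := exists_pow_lt_of_lt_one hpos (y := (2⁻¹ : ℝ)) (by norm_num)
  have hnotMem : u ∉ dyadicUnits N := fun h =>
    ((mem_dyadicUnits.1 h).trans (pow_le_pow_of_le_one (by norm_num) (by norm_num)
      (Nat.le_add_right N 2))).not_gt hN
  by_contra! h
  exact hnotMem (Nat.rec hu h N)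

theorem dyadicUnits_le_of_mem {H : Subgroup ℚ_[2]ˣ} (hH : IsClosed (H : Set ℚ_[2]ˣ)) {n : ℕ}
    {g : ℚ_[2]ˣ} (hgH : g ∈ H) (hg : g ∈ dyadicUnits n) (hg' : g ∉ dyadicUnits (n + 1)) :
    dyadicUnits n ≤ H := fun x hx => by
  refine mem_of_norm_sub_one_le hH hgH
    (norm_sub_one_le_quarter (dyadicUnits_antitone n.zero_le hg)) ?_
  rw [norm_sub_one_eq_of_notMem_succ hg hg']
  exact mem_dyadicUnits.1 hx

theorem inf_dyadicUnits_zero_eq_bot {H : Subgroup ℚ_[2]ˣ} (hH : IsClosed (H : Set ℚ_[2]ˣ))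
    (hopen : ¬IsOpen (H : Set ℚ_[2]ˣ)) : H ⊓ dyadicUnits 0 = ⊥ := by
  refine (Subgroup.eq_bot_iff_forall _).2 fun g hg => ?_
  by_contra hg1
  obtain ⟨n, hgn, hgn'⟩ := exists_mem_notMem_dyadicUnits_succ hg.2 hg1
  exact hopen (Subgroup.isOpen_mono (dyadicUnits_le_of_mem hH hg.1 hgn hgn') (isOpen_dyadicUnits n))

theorem exists_inf_dyadicUnits_zero_eq {H : Subgroup ℚ_[2]ˣ} (hopen : IsOpen (H : Set ℚ_[2]ˣ)) :
    ∃ n, H ⊓ dyadicUnits 0 = dyadicUnits n := by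
  have hexists : ∃ n, dyadicUnits n ≤ H :=
    (tendsto_smallSets_iff.1 tendsto_dyadicUnits _ (hopen.mem_nhds (one_mem H))).exists
  classical
  refine ⟨Nat.find hexists, le_antisymm (fun g hg => ?_)
    (le_inf (Nat.find_spec hexists) (dyadicUnits_antitone (Nat.zero_le _)))⟩
  by_contra hgn
  have hg1 : g ≠ 1 := fun h => hgn (h ▸ one_mem _)
  obtain ⟨m, hgm, hgm'⟩ := exists_mem_notMem_dyadicUnits_succ hg.2 hg1
  have hmin : Nat.find hexists ≤ m := Nat.find_min' hexists
    (dyadicUnits_le_of_mem (Subgroup.isClosed_of_isOpen H hopen) hg.1 hgm hgm')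
  exact hgn (dyadicUnits_antitone hmin hgm)

theorem eq_inf_or_eq_inf_sup_zpowers {H : Subgroup ℚ_[2]ˣ} (hH : H ≤ normOneUnits ℚ_[2]) :
    H = H ⊓ dyadicUnits 0 ∨ ∃ w ∈ dyadicUnits 0, w ^ 2 ∈ H ∧
      H = H ⊓ dyadicUnits 0 ⊔ Subgroup.zpowers (-w) := by
  by_cases hle : H ≤ dyadicUnits 0
  · exact .inl (inf_eq_left.2 hle).symm
  · right
    obtain ⟨h, hh, hh0⟩ := SetLike.not_le_iff_exists.1 hle
    have hw := (mem_or_neg_mem_dyadicUnits_zero (hH hh)).resolve_left hh0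
    refine ⟨-h, hw, by simpa using pow_mem hh 2, le_antisymm (fun x hx => ?_)
      (sup_le inf_le_left (Subgroup.zpowers_le.2 (by simpa using hh)))⟩
    rw [neg_neg]
    obtain hx0 | hx0 := mem_or_neg_mem_dyadicUnits_zero (hH hx)
    · exact Subgroup.mem_sup_left ⟨hx, hx0⟩
    · rw [← mul_inv_cancel_right x h]
      refine mul_mem (Subgroup.mem_sup_left ⟨mul_mem hx hh, ?_⟩)
        (Subgroup.mem_sup_right (inv_mem (Subgroup.mem_zpowers h)))
      simpa using mul_mem hx0 hw

/-- The unit `1 + 2 ^ (m + 2)`, which lies in `dyadicUnits m` but not in `dyadicUnits (m + 1)`. -/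
noncomputable def oneAddPow (m : ℕ) : ℚ_[2]ˣ :=
  Units.mk0 (1 + 2 ^ (m + 2)) (mod_cast (by positivity : 1 + 2 ^ (m + 2) ≠ 0))

theorem oneAddPow_mem_dyadicUnits_iff {m n : ℕ} : oneAddPow m ∈ dyadicUnits n ↔ n ≤ m := by
  rw [mem_dyadicUnits, oneAddPow, Units.val_mk0, add_sub_cancel_left, norm_two_pow,
    pow_le_pow_iff_right_of_lt_one₀ (by norm_num) two_inv_lt_one, Nat.add_le_add_iff_right]

theorem oneAddPow_mem_dyadicUnits_zero (m : ℕ) : oneAddPow m ∈ dyadicUnits 0 :=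
  oneAddPow_mem_dyadicUnits_iff.2 m.zero_le

theorem dyadicUnits_injective : Function.Injective dyadicUnits := fun _ _ h =>
  le_antisymm (oneAddPow_mem_dyadicUnits_iff.1 (h ▸ oneAddPow_mem_dyadicUnits_iff.2 le_rfl))
    (oneAddPow_mem_dyadicUnits_iff.1 (h ▸ oneAddPow_mem_dyadicUnits_iff.2 le_rfl))

/-- The subgroups of `{1, -1}`. -/
noncomputable def signs : Fin 2 → Subgroup ℚ_[2]ˣ
  | 0 => ⊥
  | 1 => Subgroup.zpowers (-1)

/-- The open groups of units of norm one. Those contained in `dyadicUnits 0` are the groups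
`thickenedSigns 0 k`; among the others, `thickenedSigns 1 (2 * n)` contains `-1` and
`thickenedSigns 1 (2 * n + 1)` does not. -/
noncomputable def thickenedSigns : Fin 2 → ℕ → Subgroup ℚ_[2]ˣ
  | 0, k => dyadicUnits k
  | 1, k => dyadicUnits ((k + 1) / 2) ⊔ Subgroup.zpowers (-oneAddPow (k / 2))

theorem thickenedSigns_one_even (n : ℕ) :
    thickenedSigns 1 (2 * n) = dyadicUnits n ⊔ Subgroup.zpowers (-oneAddPow n) := by
  simp only [thickenedSigns]
  congr <;> lia

theorem thickenedSigns_one_odd (n : ℕ) :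
    thickenedSigns 1 (2 * n + 1) = dyadicUnits (n + 1) ⊔ Subgroup.zpowers (-oneAddPow n) := by
  simp only [thickenedSigns]
  congr <;> lia

theorem signs_injective : Function.Injective signs := by
  have hne : signs 0 ≠ signs 1 := fun h =>
    neg_notMem_dyadicUnits_zero (one_mem _) <|
      (Subgroup.zpowers_eq_bot.1 h.symm).symm ▸ one_mem _
  intro i j h
  match i, j with
  | 0, 0 => rfl
  | 0, 1 => exact absurd h hne
  | 1, 0 => exact absurd h.symm hne
  | 1, 1 => rfl

theorem finite_signs (i : Fin 2) : (signs i : Set ℚ_[2]ˣ).Finite := by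
  match i with
  | 0 => simp [signs]
  | 1 => exact finite_zpowers.2 (isOfFinOrder_iff_pow_eq_one.2 ⟨2, two_pos, by simp⟩)

theorem exists_eq_signs_of_not_isOpen {H : Subgroup ℚ_[2]ˣ} (hH : IsClosed (H : Set ℚ_[2]ˣ))
    (hopen : ¬IsOpen (H : Set ℚ_[2]ˣ)) (hle : H ≤ normOneUnits ℚ_[2]) : ∃ i, H = signs i := by
  have hbot := inf_dyadicUnits_zero_eq_bot hH hopen
  obtain heq | ⟨w, hw, hw2, heq⟩ := eq_inf_or_eq_inf_sup_zpowers hle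
  · exact ⟨0, heq.trans hbot⟩
  · refine ⟨1, heq.trans ?_⟩
    have hsq : w ^ 2 = 1 := (Subgroup.eq_bot_iff_forall _).1 hbot _ ⟨hw2, pow_mem hw 2⟩
    have hw1 : w = 1 := by
      by_contra hne
      obtain ⟨n, -, hn⟩ := exists_mem_notMem_dyadicUnits_succ hw hne
      exact hn ((sq_mem_dyadicUnits_succ_iff hw).1 (hsq ▸ one_mem _))
    rw [hbot, hw1, bot_sup_eq, signs]

theorem exists_eq_thickenedSigns_of_isOpen {H : Subgroup ℚ_[2]ˣ}
    (hopen : IsOpen (H : Set ℚ_[2]ˣ)) (hle : H ≤ normOneUnits ℚ_[2]) :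
    ∃ i k, H = thickenedSigns i k := by
  obtain ⟨n, hn⟩ := exists_inf_dyadicUnits_zero_eq hopen
  obtain heq | ⟨w, hw, hw2, heq⟩ := eq_inf_or_eq_inf_sup_zpowers hle
  · exact ⟨0, n, heq.trans hn⟩
  · refine ⟨1, ?_⟩
    rw [hn] at heq
    by_cases hwn : w ∈ dyadicUnits n
    · refine ⟨2 * n, heq.trans ?_⟩
      rw [thickenedSigns_one_even]
      refine sup_zpowers_eq_of_mul_mem ?_
      simpa using mul_mem hwn (oneAddPow_mem_dyadicUnits_iff.2 le_rfl)
    · obtain _ | m := n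
      · exact absurd hw hwn
      have hwm : w ∈ dyadicUnits m := (sq_mem_dyadicUnits_succ_iff hw).1
        (hn ▸ Subgroup.mem_inf.2 ⟨hw2, pow_mem hw 2⟩)
      refine ⟨2 * m + 1, heq.trans ?_⟩
      rw [thickenedSigns_one_odd]
      refine sup_zpowers_eq_of_mul_mem ?_
      simpa using mul_mem_dyadicUnits_succ hwm hwn (oneAddPow_mem_dyadicUnits_iff.2 le_rfl)
        (oneAddPow_mem_dyadicUnits_iff.not.2 (by lia))

theorem neg_oneAddPow_sq_mem_dyadicUnits (k : ℕ) :
    (-oneAddPow (k / 2)) ^ 2 ∈ dyadicUnits ((k + 1) / 2) := by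
  rw [neg_sq]
  refine dyadicUnits_antitone (by lia : (k + 1) / 2 ≤ k / 2 + 1) ?_
  exact (sq_mem_dyadicUnits_succ_iff (oneAddPow_mem_dyadicUnits_zero _)).2
    (oneAddPow_mem_dyadicUnits_iff.2 le_rfl)

theorem thickenedSigns_one_inf_dyadicUnits_zero (k : ℕ) :
    thickenedSigns 1 k ⊓ dyadicUnits 0 = dyadicUnits ((k + 1) / 2) :=
  sup_zpowers_inf_eq_of_sq_mem (dyadicUnits_antitone (Nat.zero_le _))
    (neg_notMem_dyadicUnits_zero (oneAddPow_mem_dyadicUnits_zero _))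
    (neg_oneAddPow_sq_mem_dyadicUnits k)

theorem neg_one_mem_thickenedSigns_one_iff {k : ℕ} : -1 ∈ thickenedSigns 1 k ↔ Even k := by
  have hnotMem : (-1 : ℚ_[2]ˣ) ∉ dyadicUnits ((k + 1) / 2) := fun h =>
    neg_notMem_dyadicUnits_zero (one_mem _) (dyadicUnits_antitone (Nat.zero_le _) h)
  simp only [thickenedSigns]
  rw [mem_sup_zpowers_iff_of_sq_mem (neg_oneAddPow_sq_mem_dyadicUnits k), or_iff_right hnotMem,
    neg_one_mul, neg_neg, oneAddPow_mem_dyadicUnits_iff]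
  grind

theorem not_thickenedSigns_one_le (k : ℕ) : ¬thickenedSigns 1 k ≤ dyadicUnits 0 := fun h =>
  neg_notMem_dyadicUnits_zero (oneAddPow_mem_dyadicUnits_zero _)
    (h (Subgroup.mem_sup_right (Subgroup.mem_zpowers _)))

theorem thickenedSigns_injective : Function.Injective (Function.uncurry thickenedSigns) := by
  have hzero_ne_one (k l : ℕ) : thickenedSigns 0 k ≠ thickenedSigns 1 l := fun h =>
    not_thickenedSigns_one_le l (h ▸ dyadicUnits_antitone k.zero_le)
  rintro ⟨i, k⟩ ⟨j, l⟩ h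
  simp only [Function.uncurry] at h
  match i, j with
  | 0, 0 => rw [dyadicUnits_injective h]
  | 0, 1 => exact absurd h (hzero_ne_one k l)
  | 1, 0 => exact absurd h.symm (hzero_ne_one l k)
  | 1, 1 =>
    have hlevel : (k + 1) / 2 = (l + 1) / 2 := dyadicUnits_injective <| by
      rw [← thickenedSigns_one_inf_dyadicUnits_zero, h, thickenedSigns_one_inf_dyadicUnits_zero]
    have hparity : Even k ↔ Even l := by
      rw [← neg_one_mem_thickenedSigns_one_iff, h, neg_one_mem_thickenedSigns_one_iff]
    rw [show k = l by grind]

theorem isOpen_thickenedSigns (i : Fin 2) (k : ℕ) :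
    IsOpen (thickenedSigns i k : Set ℚ_[2]ˣ) := by
  match i with
  | 0 => exact isOpen_dyadicUnits k
  | 1 => exact Subgroup.isOpen_mono le_sup_left (isOpen_dyadicUnits _)

theorem thickenedSigns_le_normOneUnits (i : Fin 2) (k : ℕ) :
    thickenedSigns i k ≤ normOneUnits ℚ_[2] := by
  match i with
  | 0 => exact dyadicUnits_le_normOneUnits k
  | 1 =>
    refine sup_le (dyadicUnits_le_normOneUnits _) (Subgroup.zpowers_le.2 ?_)
    rw [mem_normOneUnits, Units.val_neg, norm_neg, ← mem_normOneUnits]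
    exact dyadicUnits_le_normOneUnits 0 (oneAddPow_mem_dyadicUnits_zero _)

theorem thickenedSigns_sup_dyadicUnits (i : Fin 2) (k : ℕ) :
    thickenedSigns i k ⊔ dyadicUnits (k / 2) = signs i ⊔ dyadicUnits (k / 2) := by
  match i with
  | 0 => simp [thickenedSigns, signs, dyadicUnits_antitone (Nat.div_le_self k 2)]
  | 1 =>
    simp only [thickenedSigns, signs]
    rw [sup_right_comm, sup_eq_right.2 (dyadicUnits_antitone (by lia : k / 2 ≤ (k + 1) / 2)),
      sup_comm (Subgroup.zpowers _)]
    refine sup_zpowers_eq_of_mul_mem ?_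
    simpa using oneAddPow_mem_dyadicUnits_iff.2 le_rfl

/-- `signs i` as a point of the Chabauty space. -/
noncomputable def signsPoint (i : Fin 2) : ChabautySpace ℚ_[2]ˣ :=
  ⟨signs i, (finite_signs i).isClosed⟩

/-- `thickenedSigns i k` as a point of the Chabauty space. -/
noncomputable def thickenedSignsPoint (i : Fin 2) (k : ℕ) : ChabautySpace ℚ_[2]ˣ :=
  ⟨thickenedSigns i k, Subgroup.isClosed_of_isOpen _ (isOpen_thickenedSigns i k)⟩

theorem tendsto_thickenedSignsPoint (i : Fin 2) :
    Tendsto (thickenedSignsPoint i) atTop (𝓝 (signsPoint i)) := by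
  have hhalf : Tendsto (fun k : ℕ => k / 2) atTop atTop :=
    Nat.tendsto_div_const_atTop two_ne_zero
  refine ChabautySpace.tendsto_of_subset_mul (finite_signs i).isCompact
    (tendsto_dyadicUnits.comp hhalf) (fun k => ?_) fun k => ?_
  · rw [Function.comp_apply, ← Subgroup.mul_normal]
    exact SetLike.coe_subset_coe.2 (le_sup_left.trans (thickenedSigns_sup_dyadicUnits i k).le)
  · rw [Function.comp_apply, ← Subgroup.mul_normal]
    exact SetLike.coe_subset_coe.2 (le_sup_left.trans (thickenedSigns_sup_dyadicUnits i k).ge)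

theorem signs_inf_dyadicUnits_zero (i : Fin 2) : signs i ⊓ dyadicUnits 0 = ⊥ := by
  match i with
  | 0 => exact bot_inf_eq _
  | 1 =>
    rw [signs, ← bot_sup_eq (Subgroup.zpowers (-1 : ℚ_[2]ˣ))]
    exact sup_zpowers_inf_eq_of_sq_mem bot_le (neg_notMem_dyadicUnits_zero (one_mem _)) (by simp)

theorem dyadicUnits_ne_bot (n : ℕ) : dyadicUnits n ≠ ⊥ := fun h =>
  n.succ_ne_self (dyadicUnits_injective
    ((eq_bot_mono (dyadicUnits_antitone n.le_succ) h).trans h.symm))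

theorem not_isOpen_signs (i : Fin 2) : ¬IsOpen (signs i : Set ℚ_[2]ˣ) := fun h => by
  obtain ⟨n, hn⟩ := exists_inf_dyadicUnits_zero_eq h
  exact dyadicUnits_ne_bot n (hn.symm.trans (signs_inf_dyadicUnits_zero i))

theorem setOf_not_isOpen_eq_iUnion_range :
    {H : ChabautySpace ℚ_[2]ˣ | ¬IsOpen (H.1 : Set ℚ_[2]ˣ)} =
      ⋃ i, range (supZPowersPoint (finite_signs i).isCompact) := by
  ext H
  simp only [mem_ofPred_eq, mem_iUnion, mem_range]
  constructor
  · intro hopen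
    obtain ⟨g, hg, hH⟩ := exists_eq_supZPowers H.1
    have hunits : IsClosed ((H.1 ⊓ normOneUnits ℚ_[2] : Subgroup ℚ_[2]ˣ) : Set ℚ_[2]ˣ) :=
      H.2.inter (Subgroup.isClosed_of_isOpen _ isOpen_normOneUnits)
    obtain ⟨i, hi⟩ := exists_eq_signs_of_not_isOpen hunits
      (fun h => hopen (Subgroup.isOpen_mono inf_le_left h)) inf_le_right
    exact ⟨i, ⟨g, mem_ball_zero_iff.2 hg⟩, Subtype.ext (hi ▸ hH).symm⟩
  · rintro ⟨i, g, rfl⟩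
    exact not_isOpen_supZPowers (le_normOneUnits_of_isCompact (finite_signs i).isCompact)
      (mem_ball_zero_iff.1 g.2) (not_isOpen_signs i)

theorem isCompact_setOf_not_isOpen :
    IsCompact {H : ChabautySpace ℚ_[2]ˣ | ¬IsOpen (H.1 : Set ℚ_[2]ˣ)} := by
  have : CompactSpace (Metric.ball (0 : ℚ_[2]) 1) := isCompact_iff_compactSpace.1 <|
    Metric.isCompact_of_isClosed_isBounded (IsUltrametricDist.isClosed_ball _ _)
      Metric.isBounded_ball
  rw [setOf_not_isOpen_eq_iUnion_range]
  exact isCompact_iUnion fun i => isCompact_range (continuous_supZPowersPoint _)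

theorem preperfect_setOf_not_isOpen :
    Preperfect {H : ChabautySpace ℚ_[2]ˣ | ¬IsOpen (H.1 : Set ℚ_[2]ˣ)} := by
  intro H hH
  have hmem := hH
  rw [setOf_not_isOpen_eq_iUnion_range] at hmem ⊢
  obtain ⟨i, g, rfl⟩ := mem_iUnion.1 hmem
  exact (accPt_supZPowersPoint _ g hH).mono
    (principal_mono.2 (subset_iUnion_of_subset i Subset.rfl))

theorem exists_continuous_injective_bool (p : ℕ) [Fact p.Prime] :
    ∃ f : ChabautySpace ℚ_[p]ˣ → ℕ → Bool, Continuous f ∧ Function.Injective f := by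
  have : SecondCountableTopology ℚ_[p]ˣ := Units.isEmbedding_val₀.secondCountableTopology
  have : TotallyDisconnectedSpace ℚ_[p]ˣ := ⟨Units.isEmbedding_val₀.isTotallyDisconnected
    (isTotallyDisconnected_of_totallyDisconnectedSpace _)⟩
  have : PrespectralSpace ℚ_[p]ˣ := prespectralSpace_of_totallyDisconnectedSpace _
  exact ChabautySpace.exists_continuous_injective_bool

theorem nonempty_homeomorph_setOf_not_isOpen :
    Nonempty ({H : ChabautySpace ℚ_[2]ˣ | ¬IsOpen (H.1 : Set ℚ_[2]ˣ)} ≃ₜ (ℕ → Bool)) := by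
  obtain ⟨f, hf, hinj⟩ := exists_continuous_injective_bool 2
  exact CantorSpace.nonempty_homeomorph_of_preperfect hf hinj isCompact_setOf_not_isOpen
    preperfect_setOf_not_isOpen ⟨signsPoint 0, not_isOpen_signs 0⟩

theorem not_isOpen_and_index_ne_zero_iff {H : ChabautySpace ℚ_[2]ˣ} :
    ¬(IsOpen (H.1 : Set ℚ_[2]ˣ) ∧ H.1.index ≠ 0) ↔
      ¬IsOpen (H.1 : Set ℚ_[2]ˣ) ∨ ∃ i k, thickenedSignsPoint i k = H := by
  constructor
  · intro h
    refine or_iff_not_imp_left.2 fun hopen => ?_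
    rw [not_not] at hopen
    have hle : H.1 ≤ normOneUnits ℚ_[2] := fun x hx => mem_normOneUnits.2 <| by
      by_contra hx1
      exact h ⟨hopen, index_ne_zero_of_isOpen hopen hx hx1⟩
    obtain ⟨i, k, hik⟩ := exists_eq_thickenedSigns_of_isOpen hopen hle
    exact ⟨i, k, Subtype.ext hik.symm⟩
  · rintro (h | ⟨i, k, rfl⟩) ⟨hopen, hindex⟩
    · exact h hopen
    · exact hindex (index_eq_zero_of_le_normOneUnits (thickenedSigns_le_normOneUnits i k))

end PadicUnits

open PadicUnits

/-- For `G = ℚ_2^×`, with `N` the set of open finite-index subgroups,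
`C(G) ∖ N` is homeomorphic to the space obtained by glueing `[2] × ℕ̄` on the Cantor
space `{0,1}^ℕ`, the `2` accumulation points `(i, ∞)` being identified with `2`
pairwise distinct points of the Cantor space. -/
theorem chabauty_dyadicUnits_minus_N :
    ∃ c : Fin 2 → (ℕ → Bool), Function.Injective c ∧
      Nonempty (
        {H : ChabautySpace ℚ_[2]ˣ | ¬(IsOpen (H.1 : Set ℚ_[2]ˣ) ∧ H.1.index ≠ 0)} ≃ₜ
        Quot (fun x y : (ℕ → Bool) ⊕ (Fin 2 × OnePoint ℕ) =>
          ∃ i, x = Sum.inl (c i) ∧ y = Sum.inr (i, ∞))) := by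
  obtain ⟨f, hf, hf_inj⟩ := exists_continuous_injective_bool 2
  have : T2Space (ChabautySpace ℚ_[2]ˣ) := T2Space.of_injective_continuous hf_inj hf
  obtain ⟨Φ⟩ := nonempty_homeomorph_setOf_not_isOpen
  refine ⟨fun i => Φ ⟨signsPoint i, not_isOpen_signs i⟩, Φ.injective.comp fun i j hij => ?_, ?_⟩
  · exact signs_injective (congrArg (fun H => H.1.1) hij)
  · refine Gluing.nonempty_homeomorph_quot_glueRel
      (e := fun x => ⟨(Φ.symm x).1, not_isOpen_and_index_ne_zero_iff.2 (.inl (Φ.symm x).2)⟩)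
      (s := fun i k => ⟨thickenedSignsPoint i k,
        not_isOpen_and_index_ne_zero_iff.2 (.inr ⟨i, k, rfl⟩)⟩)
      (by fun_prop) ?_ ?_ ?_ ?_ ?_
    · exact fun x y h => Φ.symm.injective (Subtype.ext (congrArg (fun H => H.1) h))
    · exact fun i => tendsto_subtype_rng.2 (by simpa using tendsto_thickenedSignsPoint i)
    · exact fun p q h => thickenedSigns_injective (congrArg (fun H => H.1.1) h)
    · rintro i k ⟨x, hx⟩
      exact (Φ.symm x).2 (congrArg (fun H => H.1) hx ▸ isOpen_thickenedSigns i k)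
    · rintro ⟨H, hH⟩
      obtain h | ⟨i, k, hik⟩ := not_isOpen_and_index_ne_zero_iff.1 hH
      · exact .inl ⟨Φ ⟨H, h⟩, by simp⟩
      · exact .inr ⟨i, k, Subtype.ext hik⟩
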